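/- Let n ≥ 2 be an integer and let λ, ν ∈ ℂ satisfy Re(λ−ν) > 0 and Re(λ+ν) > n−1. Then for every continuous compactly supported function F : ℝⁿ → ℂ and every x ∈ ℝⁿ⁻¹, the function (y, yₙ) ↦ F(y, yₙ)·k_{λ,ν}(x−y, −yₙ) is Lebesgue integrable on ℝⁿ; in particular the value (A_{λ,ν}F)(x) = ∫_{ℝⁿ} F(y, yₙ) k_{λ,ν}(x−y, −yₙ) dy dyₙ is well defined. -/

import Mathlib

open MeasureTheory

/-- The kernel `k_{λ,ν}(x, xₙ) = |xₙ|^{λ+ν−n} (|x|² + xₙ²)^{−ν}` on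
`ℝⁿ = ℝⁿ⁻¹ × ℝ`, assigned the value `0` on the null set `{xₙ = 0}`. -/
noncomputable def kker (n : ℕ) (lam nu : ℂ) :
    EuclideanSpace ℝ (Fin (n - 1)) × ℝ → ℂ := fun p =>
  if p.2 = 0 then 0
  else ((|p.2| : ℝ) : ℂ) ^ (lam + nu - (n : ℂ)) *
    ((‖p.1‖ ^ 2 + p.2 ^ 2 : ℝ) : ℂ) ^ (-nu)

/-!
The integral is the convolution of `F` with `kker n lam nu` at `(x, 0)`, so it suffices that the
kernel be locally integrable. Its modulus is `|t| ^ a * (‖z‖ ^ 2 + t ^ 2) ^ b` with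
`a = Re (lam + nu) - n > -1` and `a + 2 * b = Re (lam - nu) - n > -n`. For `b ≥ 0` the second factor
is continuous. For `b < 0` we split `2 * b = c + d` with `c, d ≤ 0` and bound the second factor by
`‖z‖ ^ c * |t| ^ d`. The lower bounds on `a` and `a + 2 * b` leave room to choose `c > -(n - 1)` and
`a + d > -1`, which makes the majorant a product of locally integrable functions.
-/

theorem add_sq_rpow_le_rpow_mul_rpow {r t c d : ℝ} (hr : 0 < r) (ht : 0 < t) (hc : c ≤ 0)
    (hd : d ≤ 0) : (r ^ 2 + t ^ 2) ^ ((c + d) / 2) ≤ r ^ c * t ^ d := by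
  have sq_rpow_half {s : ℝ} (hs : 0 < s) (e : ℝ) : (s ^ 2) ^ (e / 2) = s ^ e := by
    rw [← Real.rpow_natCast_mul hs.le, Nat.cast_ofNat, mul_div_cancel₀ e two_ne_zero]
  calc (r ^ 2 + t ^ 2) ^ ((c + d) / 2)
      = (r ^ 2 + t ^ 2) ^ (c / 2) * (r ^ 2 + t ^ 2) ^ (d / 2) := by
        rw [add_div, Real.rpow_add (by positivity)]
    _ ≤ (r ^ 2) ^ (c / 2) * (t ^ 2) ^ (d / 2) :=
        mul_le_mul
          (Real.rpow_le_rpow_of_nonpos (by positivity) (by linarith [sq_nonneg t]) (by linarith))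
          (Real.rpow_le_rpow_of_nonpos (by positivity) (by linarith [sq_nonneg r]) (by linarith))
          (by positivity) (by positivity)
    _ = r ^ c * t ^ d := by rw [sq_rpow_half hr, sq_rpow_half ht]

theorem exists_nonpos_add_eq_and_neg_lt {k m a b : ℝ} (hk : 0 < k) (ha : -m < a)
    (hab : -(k + m) < a + b) (hb : b < 0) :
    ∃ c d : ℝ, c ≤ 0 ∧ d ≤ 0 ∧ c + d = b ∧ -k < c ∧ -m < a + d := by
  obtain ⟨c, hlower, hupper⟩ : ∃ c, max (-k) b < c ∧ c < min 0 (a + b + m) :=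
    exists_between <| by
      simp only [max_lt_iff, lt_min_iff]
      constructor <;> constructor <;> linarith
  rw [max_lt_iff] at hlower
  rw [lt_min_iff] at hupper
  exact ⟨c, b - c, by linarith, by linarith, by ring, hlower.1, by linarith⟩

theorem locallyIntegrable_prod_mul {X Y R : Type*} [TopologicalSpace X] [MeasurableSpace X]
    [TopologicalSpace Y] [MeasurableSpace Y] [NormedRing R] {μ : Measure X} {ν : Measure Y}
    [SFinite μ] [SFinite ν] {f : X → R} {g : Y → R}
    (hf : LocallyIntegrable f μ) (hg : LocallyIntegrable g ν) :
    LocallyIntegrable (fun p : X × Y => f p.1 * g p.2) (μ.prod ν) := by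
  rintro ⟨x, y⟩
  obtain ⟨s, hs, hfs⟩ := hf x
  obtain ⟨t, ht, hgt⟩ := hg y
  refine ⟨s ×ˢ t, prod_mem_nhds hs ht, ?_⟩
  rw [IntegrableOn, ← Measure.prod_restrict]
  exact hfs.mul_prod hgt

section NormRpow

variable {E F : Type*} [NormedAddCommGroup E] [NormedSpace ℝ E] [FiniteDimensional ℝ E]
  [MeasurableSpace E] [BorelSpace E] {μ : Measure E} [μ.IsAddHaarMeasure]
  [NormedAddCommGroup F] [NormedSpace ℝ F] [FiniteDimensional ℝ F]
  [Nontrivial F] [MeasurableSpace F] [BorelSpace F] {ν : Measure F} [ν.IsAddHaarMeasure]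

theorem locallyIntegrable_norm_rpow {s : ℝ} (hs : -(Module.finrank ℝ F : ℝ) < s) :
    LocallyIntegrable (fun x : F => ‖x‖ ^ s) ν := by
  refine locallyIntegrable_of_norm_le_rpow (C := 1) (α := -s) Module.finrank_pos (by linarith)
    (.of_forall fun x => ?_) (measurable_norm.pow_const s).aestronglyMeasurable
  rw [Real.norm_of_nonneg (by positivity), neg_neg, one_mul]

theorem locallyIntegrable_norm_snd_rpow_mul_add_sq_rpow_of_nonneg {a b : ℝ}
    (ha : -(Module.finrank ℝ F : ℝ) < a) (hb : 0 ≤ b) :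
    LocallyIntegrable (fun p : E × F => ‖p.2‖ ^ a * (‖p.1‖ ^ 2 + ‖p.2‖ ^ 2) ^ b) (μ.prod ν) := by
  have hsnd : LocallyIntegrable (fun p : E × F => ‖p.2‖ ^ a) (μ.prod ν) := by
    simpa only [one_mul] using
      locallyIntegrable_prod_mul (locallyIntegrable_const 1) (locallyIntegrable_norm_rpow ha)
  exact hsnd.mul_continuous (Continuous.rpow_const (by fun_prop) fun _ => .inr hb)

variable [Nontrivial E]

theorem locallyIntegrable_norm_fst_rpow_mul_norm_snd_rpow {c d : ℝ}
    (hc : -(Module.finrank ℝ E : ℝ) < c) (hd : -(Module.finrank ℝ F : ℝ) < d) :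
    LocallyIntegrable (fun p : E × F => ‖p.1‖ ^ c * ‖p.2‖ ^ d) (μ.prod ν) :=
  locallyIntegrable_prod_mul (locallyIntegrable_norm_rpow hc) (locallyIntegrable_norm_rpow hd)

theorem locallyIntegrable_norm_snd_rpow_mul_add_sq_rpow_of_neg {a b : ℝ}
    (ha : -(Module.finrank ℝ F : ℝ) < a)
    (hab : -((Module.finrank ℝ E : ℝ) + Module.finrank ℝ F) < a + 2 * b) (hb : b < 0) :
    LocallyIntegrable (fun p : E × F => ‖p.2‖ ^ a * (‖p.1‖ ^ 2 + ‖p.2‖ ^ 2) ^ b) (μ.prod ν) := by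
  obtain ⟨c, d, hc, hd, hcd, hcE, hdF⟩ :=
    exists_nonpos_add_eq_and_neg_lt (Nat.cast_pos.mpr Module.finrank_pos) ha hab (by linarith)
  have hfst : ∀ᵐ p : E × F ∂μ.prod ν, p.1 ≠ 0 :=
    Measure.quasiMeasurePreserving_fst.ae (Measure.ae_ne μ 0)
  have hsnd : ∀ᵐ p : E × F ∂μ.prod ν, p.2 ≠ 0 :=
    Measure.quasiMeasurePreserving_snd.ae (Measure.ae_ne ν 0)
  refine (locallyIntegrable_norm_fst_rpow_mul_norm_snd_rpow hcE hdF).mono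
    (Measurable.aestronglyMeasurable (by fun_prop)) ?_
  filter_upwards [hfst, hsnd] with p hp₁ hp₂
  have hr : 0 < ‖p.1‖ := norm_pos_iff.mpr hp₁
  have ht : 0 < ‖p.2‖ := norm_pos_iff.mpr hp₂
  rw [Real.norm_of_nonneg (by positivity), Real.norm_of_nonneg (by positivity)]
  calc ‖p.2‖ ^ a * (‖p.1‖ ^ 2 + ‖p.2‖ ^ 2) ^ b
      = ‖p.2‖ ^ a * (‖p.1‖ ^ 2 + ‖p.2‖ ^ 2) ^ ((c + d) / 2) := by
        rw [hcd, mul_div_cancel_left₀ b two_ne_zero]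
    _ ≤ ‖p.2‖ ^ a * (‖p.1‖ ^ c * ‖p.2‖ ^ d) := by
        gcongr
        exact add_sq_rpow_le_rpow_mul_rpow hr ht hc hd
    _ = ‖p.1‖ ^ c * ‖p.2‖ ^ (a + d) := by
        rw [Real.rpow_add ht, mul_left_comm]

theorem locallyIntegrable_norm_snd_rpow_mul_add_sq_rpow {a b : ℝ}
    (ha : -(Module.finrank ℝ F : ℝ) < a)
    (hab : -((Module.finrank ℝ E : ℝ) + Module.finrank ℝ F) < a + 2 * b) :
    LocallyIntegrable (fun p : E × F => ‖p.2‖ ^ a * (‖p.1‖ ^ 2 + ‖p.2‖ ^ 2) ^ b) (μ.prod ν) :=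
  (le_or_gt 0 b).elim (locallyIntegrable_norm_snd_rpow_mul_add_sq_rpow_of_nonneg ha)
    (locallyIntegrable_norm_snd_rpow_mul_add_sq_rpow_of_neg ha hab)

end NormRpow

theorem measurable_kker (n : ℕ) (lam nu : ℂ) : Measurable (kker n lam nu) :=
  Measurable.ite (measurable_snd (measurableSet_singleton 0)) measurable_const
    (((by fun_prop : Measurable _).pow_const _).mul ((by fun_prop : Measurable _).pow_const _))

theorem norm_kker_le (n : ℕ) (lam nu : ℂ) (p : EuclideanSpace ℝ (Fin (n - 1)) × ℝ) :
    ‖kker n lam nu p‖ ≤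
      ‖p.2‖ ^ ((lam + nu).re - n) * (‖p.1‖ ^ 2 + ‖p.2‖ ^ 2) ^ (-nu.re) := by
  by_cases hp : p.2 = 0
  · rw [kker, if_pos hp, norm_zero]
    positivity
  · have habs : 0 < |p.2| := abs_pos.mpr hp
    rw [kker, if_neg hp, norm_mul, Complex.norm_cpow_eq_rpow_re_of_pos habs,
      Complex.norm_cpow_eq_rpow_re_of_pos (by positivity), Complex.sub_re, Complex.natCast_re,
      Complex.neg_re, Real.norm_eq_abs, sq_abs]

theorem locallyIntegrable_kker {n : ℕ} (hn : 2 ≤ n) {lam nu : ℂ}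
    (hsub : 0 < (lam - nu).re) (hadd : (n : ℝ) - 1 < (lam + nu).re) :
    LocallyIntegrable (kker n lam nu) volume := by
  have : NeZero (n - 1) := ⟨by omega⟩
  have hdim : (Module.finrank ℝ (EuclideanSpace ℝ (Fin (n - 1))) : ℝ) = n - 1 := by
    rw [finrank_euclideanSpace_fin, Nat.cast_pred (by omega)]
  have hexponent : (lam + nu).re - n + 2 * -nu.re = (lam - nu).re - n := by
    rw [Complex.add_re, Complex.sub_re]
    ring
  have hmajorant := locallyIntegrable_norm_snd_rpow_mul_add_sq_rpow (F := ℝ)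
    (μ := (volume : Measure (EuclideanSpace ℝ (Fin (n - 1))))) (ν := volume)
    (a := (lam + nu).re - n) (b := -nu.re)
    (by rw [Module.finrank_self, Nat.cast_one]; linarith)
    (by rw [hdim, Module.finrank_self, Nat.cast_one, hexponent]; linarith)
  exact hmajorant.mono (measurable_kker n lam nu).aestronglyMeasurable
    (.of_forall fun p => (norm_kker_le n lam nu p).trans (Real.le_norm_self _))

theorem symmetry_breaking_integrand_integrable (n : ℕ) (hn : 2 ≤ n) (lam nu : ℂ)
    (h1 : 0 < (lam - nu).re) (h2 : (n : ℝ) - 1 < (lam + nu).re)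
    (F : EuclideanSpace ℝ (Fin (n - 1)) × ℝ → ℂ)
    (hF : Continuous F) (hsupp : HasCompactSupport F)
    (x : EuclideanSpace ℝ (Fin (n - 1))) :
    Integrable (fun p => F p * kker n lam nu (x - p.1, -p.2)) volume := by
  have : (volume : Measure (EuclideanSpace ℝ (Fin (n - 1)) × ℝ)).IsAddHaarMeasure :=
    Measure.prod.instIsAddHaarMeasure volume volume
  have hconv : ConvolutionExistsAt F (kker n lam nu) (x, 0) (ContinuousLinearMap.mul ℝ ℂ) volume :=
    hsupp.convolutionExists_left _ hF (locallyIntegrable_kker hn h1 h2) (x, 0)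
  simpa only [ConvolutionExistsAt, ContinuousLinearMap.mul_apply', Prod.sub_def, zero_sub]
    using hconv
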